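/- Let n ≥ 2 and let S be a finite set of unit vectors in ℝ^n with S = −S which is minimally extreme with eutaxy coefficients υ_x (x ∈ S). Let ω_x (x ∈ S) be real numbers with ω_x = ω_{−x}, and let ω_0 ∈ ℝ. Then there exists a symmetric linear map Q : ℝ^n → ℝ^n with ⟨x, Qx⟩ = ω_x for all x ∈ S and trace Q = ω_0 if and only if ω_0 = Σ_{x∈S} υ_x ω_x. -/

import Mathlib

open scoped RealInnerProductSpace
open Metric MeasureTheory

noncomputable section

abbrev Euc (n : ℕ) := EuclideanSpace ℝ (Fin n)

/-- The rank-one symmetric map `P_x : y ↦ ⟪y, x⟫ • x`. -/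
def projMap {F : Type*} [NormedAddCommGroup F] [InnerProductSpace ℝ F] (x : F) :
    F →ₗ[ℝ] F where
  toFun y := (⟪y, x⟫) • x
  map_add' y z := by simp [inner_add_left, add_smul]
  map_smul' c y := by simp [real_inner_smul_left, mul_smul]

/-- A configuration is perfect if the maps `P_x`, `x ∈ S`, span the symmetric maps. -/
def IsPerfectCfg {F : Type*} [NormedAddCommGroup F] [InnerProductSpace ℝ F]
    (S : Set F) : Prop :=
  ∀ T : F →ₗ[ℝ] F, T.IsSymmetric → T ∈ Submodule.span ℝ (projMap '' S)

/-- A configuration is eutactic if `Id = Σ_{x∈S} υ_x P_x` with `υ_x > 0`, `υ_x = υ_{-x}`. -/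
def IsEutacticCfg {F : Type*} [NormedAddCommGroup F] [InnerProductSpace ℝ F]
    (S : Set F) : Prop :=
  ∃ υ : F → ℝ, (∀ x ∈ S, 0 < υ x) ∧ (∀ x ∉ S, υ x = 0) ∧
    (Function.support υ).Finite ∧ (∀ x, υ x = υ (-x)) ∧
    ∑ᶠ x, υ x • projMap x = (LinearMap.id : F →ₗ[ℝ] F)

/-- A configuration is semi-eutactic if `Id = Σ_{x∈S} υ_x P_x` with `υ_x ≥ 0`, `υ_x = υ_{-x}`. -/
def IsSemiEutacticCfg {F : Type*} [NormedAddCommGroup F] [InnerProductSpace ℝ F]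
    (S : Set F) : Prop :=
  ∃ υ : F → ℝ, (∀ x ∈ S, 0 ≤ υ x) ∧ (∀ x ∉ S, υ x = 0) ∧
    (Function.support υ).Finite ∧ (∀ x, υ x = υ (-x)) ∧
    ∑ᶠ x, υ x • projMap x = (LinearMap.id : F →ₗ[ℝ] F)

/-- A configuration is extreme if it is perfect and eutactic. -/
def IsExtremeCfg {F : Type*} [NormedAddCommGroup F] [InnerProductSpace ℝ F]
    (S : Set F) : Prop :=
  IsPerfectCfg S ∧ IsEutacticCfg S

/-- Hilbert–Schmidt (Frobenius) norm of a linear map on `ℝ^n`. -/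
def frobNorm {n : ℕ} (T : Euc n →ₗ[ℝ] Euc n) : ℝ :=
  Real.sqrt (∑ j, ∑ i, (T (EuclideanSpace.single j 1) i) ^ 2)

/-- The lattice `T ℤ^n` as a set of points. -/
def latticeSet {n : ℕ} (T : Euc n →ₗ[ℝ] Euc n) : Set (Euc n) :=
  {v | ∃ z : Fin n → ℤ, v = T (∑ i, (z i : ℝ) • EuclideanSpace.single i 1)}

/-- A set is an (n-dimensional) lattice if it is `T ℤ^n` for an invertible `T`. -/
def IsLattice {n : ℕ} (Λ : Set (Euc n)) : Prop :=
  ∃ T : Euc n →ₗ[ℝ] Euc n, LinearMap.det T ≠ 0 ∧ Λ = latticeSet T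

/-- The determinant `d(Λ) = |det T|` of a lattice. -/
def latDet {n : ℕ} (Λ : Set (Euc n)) : ℝ :=
  sInf {d | ∃ T : Euc n →ₗ[ℝ] Euc n, Λ = latticeSet T ∧ d = |LinearMap.det T|}

/-- The metric `δ(Λ, Λ') = inf ‖T - T'‖` on the space of lattices. -/
def latDist {n : ℕ} (Λ Λ' : Set (Euc n)) : ℝ :=
  sInf {d | ∃ T T' : Euc n →ₗ[ℝ] Euc n,
    Λ = latticeSet T ∧ Λ' = latticeSet T' ∧ d = frobNorm (T - T')}

/-- The minimal norm `m(Λ)`. -/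
def minNorm {n : ℕ} (Λ : Set (Euc n)) : ℝ :=
  sInf {r | ∃ x ∈ Λ, x ≠ 0 ∧ r = ‖x‖ ^ 2}

/-- The set `S(Λ)` of minimal vectors of a lattice. -/
def minVecs {n : ℕ} (Λ : Set (Euc n)) : Set (Euc n) :=
  {x | x ∈ Λ ∧ x ≠ 0 ∧ ‖x‖ ^ 2 = minNorm Λ}

/-- An origin-symmetric convex body. -/
structure IsSymCB {n : ℕ} (K : Set (Euc n)) : Prop where
  convex : Convex ℝ K
  compact : IsCompact K
  nonempty_interior : (interior K).Nonempty
  symm : -K = K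

/-- A lattice is admissible for a body if it meets the interior only at the origin. -/
def IsAdmissible {n : ℕ} (Λ K : Set (Euc n)) : Prop :=
  Λ ∩ interior K ⊆ {0}

/-- The critical determinant `d_K`. -/
def critDet {n : ℕ} (K : Set (Euc n)) : ℝ :=
  sInf {d | ∃ Λ : Set (Euc n), IsLattice Λ ∧ IsAdmissible Λ K ∧ d = latDet Λ}

/-- A critical lattice of `K`: an admissible lattice attaining the critical determinant. -/
def IsCriticalLattice {n : ℕ} (Λ K : Set (Euc n)) : Prop :=
  IsLattice Λ ∧ IsAdmissible Λ K ∧ latDet Λ = critDet K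

/-- The optimal lattice packing fraction `φ(K) = 2⁻ⁿ vol(K) / d_K`. -/
def packFrac {n : ℕ} (K : Set (Euc n)) : ℝ :=
  (volume K).toReal / (2 ^ n * critDet K)

/-- The closed unit ball `Bⁿ`. -/
def unitBall (n : ℕ) : Set (Euc n) := Metric.closedBall 0 1

/-- The support function of a body. -/
def suppFn {n : ℕ} (K : Set (Euc n)) (x : Euc n) : ℝ :=
  sSup ((fun y => ⟪x, y⟫) '' K)

/-- The radial function of a body. -/
def radFn {n : ℕ} (K : Set (Euc n)) (x : Euc n) : ℝ :=
  sSup {t : ℝ | 0 ≤ t ∧ t • x ∈ K}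

/-!
A symmetric map `Q` satisfies `tr (Q ∘ P_x) = ⟪x, Q x⟫`. Applying `Q ↦ tr (Q ∘ ·)` to
`Id = Σ υ_x P_x` shows that the trace of `Q` is determined by the values `⟪x, Q x⟫`, which gives the
necessary condition and reduces the converse to finding `Q` with the prescribed values on `S`.
Perfection says that the pairing `(Q, P) ↦ tr (Q ∘ P)` with the maps `P_x` separates symmetric maps.
Since `P_x = P_{-x}`, there are at most `n (n + 1) / 2 = dim Sym^n` of these maps, so the
injective evaluation `Q ↦ (tr (Q ∘ P_x))_{P_x}` is bijective.
-/

section SymmetricMatrix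

variable {R ι : Type*} [CommRing R] [StarRing R] [TrivialStar R]

lemma mem_selfAdjoint_submodule_iff_isSymm {A : Matrix ι ι R} :
    A ∈ selfAdjoint.submodule R (Matrix ι ι R) ↔ A.IsSymm := by
  rw [Matrix.IsSymm, ← Matrix.conjTranspose_eq_transpose_of_trivial]
  rfl

variable (R ι) in
/-- The identification of symmetric matrices with functions on unordered pairs of indices. Symmetric
matrices are encoded as the self-adjoint elements for a trivial star on the coefficients. -/
def symmetricMatrixEquivSym2 : selfAdjoint.submodule R (Matrix ι ι R) ≃ₗ[R] (Sym2 ι → R) where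
  toFun A := Sym2.lift ⟨A.1, fun i j ↦
    (mem_selfAdjoint_submodule_iff_isSymm.mp A.2).apply j i⟩
  invFun f := ⟨Matrix.of fun i j ↦ f s(i, j),
    mem_selfAdjoint_submodule_iff_isSymm.mpr <| .ext fun _ _ ↦ congrArg f Sym2.eq_swap⟩
  map_add' A B := by
    ext p
    induction p with | _ i j => rfl
  map_smul' c A := by
    ext p
    induction p with | _ i j => rfl
  left_inv A := rfl
  right_inv f := by
    ext p
    induction p with | _ i j => rfl

end SymmetricMatrix

lemma finrank_selfAdjoint_linearMap (F : Type*) [NormedAddCommGroup F] [InnerProductSpace ℝ F]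
    [FiniteDimensional ℝ F] :
    Module.finrank ℝ (selfAdjoint.submodule ℝ (F →ₗ[ℝ] F)) =
      (Module.finrank ℝ F + 1).choose 2 := by
  let toMatrix := LinearMap.toMatrixOrthonormal (stdOrthonormalBasis ℝ F)
  let toLinearEquiv := toMatrix.toAlgEquiv.toLinearEquiv
  have hcomap : (selfAdjoint.submodule ℝ (Matrix _ _ ℝ)).comap toLinearEquiv.toLinearMap =
      selfAdjoint.submodule ℝ (F →ₗ[ℝ] F) := by
    ext T
    change IsSelfAdjoint (toMatrix T) ↔ IsSelfAdjoint T
    exact ⟨fun hT ↦ by simpa using hT.map toMatrix.symm, fun hT ↦ hT.map toMatrix⟩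
  rw [← hcomap, (toLinearEquiv.ofSubmodule' _ ≪≫ₗ symmetricMatrixEquivSym2 ℝ _).finrank_eq,
    Module.finrank_fintype_fun_eq_card, Sym2.card, Fintype.card_fin]

section ProjMap

variable {F : Type*} [NormedAddCommGroup F] [InnerProductSpace ℝ F]

lemma projMap_apply (x y : F) : projMap x y = ⟪y, x⟫ • x := rfl

lemma isSymmetric_projMap (x : F) : (projMap x).IsSymmetric := fun y z ↦ by
  simp only [projMap_apply, real_inner_smul_left, real_inner_smul_right, real_inner_comm x z,
    mul_comm]

lemma projMap_neg (x : F) : projMap (-x) = projMap x := by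
  ext y
  simp [projMap_apply]

lemma eq_or_eq_neg_of_projMap_eq {x y : F} (h : projMap x = projMap y) : x = y ∨ x = -y := by
  have inner_sq (z : F) : ⟪z, x⟫ ^ 2 = ⟪z, y⟫ ^ 2 := by
    simpa [projMap_apply, real_inner_smul_right, sq] using congrArg (⟪z, · z⟫) h
  have hx : (‖x‖ ^ 2) ^ 2 = ⟪x, y⟫ ^ 2 := by simpa using inner_sq x
  have hy : ⟪x, y⟫ ^ 2 = (‖y‖ ^ 2) ^ 2 := by simpa [real_inner_comm x y] using inner_sq y
  have hnorm : ‖x‖ ^ 2 = ‖y‖ ^ 2 :=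
    (sq_eq_sq₀ (sq_nonneg _) (sq_nonneg _)).mp (hx.trans hy)
  rcases sq_eq_sq_iff_eq_or_eq_neg.mp hx with hinner | hinner
  · left
    rw [← sub_eq_zero, ← norm_eq_zero, ← sq_eq_zero_iff, norm_sub_sq_real]
    linarith
  · right
    rw [← add_eq_zero_iff_eq_neg, ← norm_eq_zero, ← sq_eq_zero_iff, norm_add_sq_real]
    linarith

lemma exists_apply_projMap_eq_of_even {α : Type*} [Nonempty α] {S : Set F} {ω : F → α}
    (hω : ∀ x ∈ S, ω x = ω (-x)) : ∃ w : (F →ₗ[ℝ] F) → α, ∀ x ∈ S, w (projMap x) = ω x := by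
  have hfactors : (S.domRestrict ω).FactorsThrough (S.domRestrict projMap) := by
    rintro ⟨x, hx⟩ ⟨y, hy⟩ hxy
    rcases eq_or_eq_neg_of_projMap_eq hxy with rfl | rfl
    · rfl
    · exact (hω y hy).symm
  obtain ⟨w, hw⟩ := (Function.factorsThrough_iff _).mp hfactors
  exact ⟨w, fun x hx ↦ (congrFun hw ⟨x, hx⟩).symm⟩

lemma two_mul_card_image_projMap_le [DecidableEq (F →ₗ[ℝ] F)] {S : Finset F} (h₀ : 0 ∉ S)
    (hsym : ∀ x ∈ S, -x ∈ S) :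
    2 * (S.image projMap).card ≤ S.card := by
  classical
  refine Finset.mul_card_image_le_card S 2 fun P hP ↦ ?_
  obtain ⟨x, hx, rfl⟩ := Finset.mem_image.mp hP
  have := IsAddTorsionFree.of_isTorsionFree ℝ F
  have hne : x ≠ -x := fun h ↦ h₀ (self_eq_neg.mp h ▸ hx)
  rw [← Finset.card_pair hne]
  refine Finset.card_le_card fun y hy ↦ ?_
  rcases Finset.mem_insert.mp hy with rfl | hy
  · simp [hx]
  · rw [Finset.mem_singleton.mp hy]
    simp [hsym x hx, projMap_neg]

variable [FiniteDimensional ℝ F]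

lemma trace_comp_projMap (Q : F →ₗ[ℝ] F) (x : F) :
    LinearMap.trace ℝ F (Q ∘ₗ projMap x) = ⟪x, Q x⟫ := by
  have h : Q ∘ₗ projMap x = (innerₗ F x).smulRight (Q x) := by
    ext y
    simp [projMap_apply, real_inner_comm]
  rw [h, LinearMap.trace_smulRight, innerₗ_apply_apply]

lemma trace_eq_sum_of_eutaxy {S : Finset F} {υ : F → ℝ}
    (heutaxy : ∑ x ∈ S, υ x • projMap x = LinearMap.id) (Q : F →ₗ[ℝ] F) :
    LinearMap.trace ℝ F Q = ∑ x ∈ S, υ x * ⟪x, Q x⟫ :=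
  calc LinearMap.trace ℝ F Q
    _ = LinearMap.trace ℝ F (Q * ∑ x ∈ S, υ x • projMap x) := by
      rw [heutaxy, Module.End.mul_eq_comp, LinearMap.comp_id]
    _ = ∑ x ∈ S, υ x * ⟪x, Q x⟫ := by
      simp only [Finset.mul_sum, mul_smul_comm, Module.End.mul_eq_comp, map_sum, map_smul,
        trace_comp_projMap, smul_eq_mul]

lemma IsPerfectCfg.eq_zero_of_inner_map_self_eq_zero {S : Set F} (hperfect : IsPerfectCfg S)
    {Q : F →ₗ[ℝ] F} (hQ : Q.IsSymmetric) (hzero : ∀ x ∈ S, ⟪x, Q x⟫ = 0) : Q = 0 := by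
  have trace_comp_eq_zero :
      Submodule.span ℝ (projMap '' S) ≤ (LinearMap.trace ℝ F ∘ₗ LinearMap.mulLeft ℝ Q).ker := by
    rw [Submodule.span_le]
    rintro _ ⟨x, hx, rfl⟩
    exact (trace_comp_projMap Q x).trans (hzero x hx)
  refine hQ.inner_map_self_eq_zero.mp fun y ↦ ?_
  rw [real_inner_comm, ← trace_comp_projMap]
  exact trace_comp_eq_zero (hperfect _ (isSymmetric_projMap y))

lemma IsPerfectCfg.exists_isSymmetric_inner_map_self_eq [DecidableEq (F →ₗ[ℝ] F)] {S : Finset F}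
    (hperfect : IsPerfectCfg (S : Set F))
    (hcard : (S.image projMap).card ≤ (Module.finrank ℝ F + 1).choose 2)
    (w : (F →ₗ[ℝ] F) → ℝ) :
    ∃ Q : F →ₗ[ℝ] F, Q.IsSymmetric ∧ ∀ x ∈ S, ⟪x, Q x⟫ = w (projMap x) := by
  let evaluation : selfAdjoint.submodule ℝ (F →ₗ[ℝ] F) →ₗ[ℝ] (S.image projMap → ℝ) :=
    LinearMap.pi fun P ↦
      LinearMap.trace ℝ F ∘ₗ LinearMap.mulRight ℝ P.1 ∘ₗ Submodule.subtype _
  have evaluation_apply (Q) {x : F} (hx : x ∈ S) :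
      evaluation Q ⟨projMap x, Finset.mem_image_of_mem _ hx⟩ = ⟪x, Q.1 x⟫ :=
    trace_comp_projMap Q.1 x
  have evaluation_injective : Function.Injective evaluation := by
    refine (injective_iff_map_eq_zero _).mpr fun Q hQ ↦ Subtype.ext ?_
    refine hperfect.eq_zero_of_inner_map_self_eq_zero
      ((LinearMap.isSymmetric_iff_isSelfAdjoint _).mpr Q.2) fun x hx ↦ ?_
    rw [← evaluation_apply Q hx, hQ, Pi.zero_apply]
  have finrank_eq : Module.finrank ℝ (selfAdjoint.submodule ℝ (F →ₗ[ℝ] F)) =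
      Module.finrank ℝ (S.image projMap → ℝ) := by
    refine le_antisymm (LinearMap.finrank_le_finrank_of_injective evaluation_injective) ?_
    rwa [Module.finrank_fintype_fun_eq_card, Fintype.card_coe, finrank_selfAdjoint_linearMap]
  obtain ⟨Q, hQ⟩ := (LinearMap.injective_iff_surjective_of_finrank_eq_finrank finrank_eq).mp
    evaluation_injective fun P ↦ w P
  refine ⟨Q, (LinearMap.isSymmetric_iff_isSelfAdjoint _).mpr Q.2, fun x hx ↦ ?_⟩
  rw [← evaluation_apply Q hx, hQ]

theorem minimally_extreme_symmetric_map_exists_general (S : Finset F)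
    (h₀ : 0 ∉ S) (hsym : ∀ x ∈ S, -x ∈ S)
    (hcard : S.card ≤ Module.finrank ℝ F * (Module.finrank ℝ F + 1))
    (hperfect : IsPerfectCfg (S : Set F)) (υ : F → ℝ)
    (heutaxy : ∑ x ∈ S, υ x • projMap x = LinearMap.id)
    (ω : F → ℝ) (hω : ∀ x ∈ S, ω x = ω (-x)) (ω₀ : ℝ) :
    (∃ Q : F →ₗ[ℝ] F, Q.IsSymmetric ∧ (∀ x ∈ S, ⟪x, Q x⟫ = ω x) ∧
        LinearMap.trace ℝ F Q = ω₀) ↔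
      ω₀ = ∑ x ∈ S, υ x * ω x := by
  classical
  have trace_eq {Q : F →ₗ[ℝ] F} (hQ : ∀ x ∈ S, ⟪x, Q x⟫ = ω x) :
      LinearMap.trace ℝ F Q = ∑ x ∈ S, υ x * ω x :=
    (trace_eq_sum_of_eutaxy heutaxy Q).trans <|
      Finset.sum_congr rfl fun x hx ↦ by rw [hQ x hx]
  constructor
  · rintro ⟨Q, -, hQ, rfl⟩
    exact trace_eq hQ
  · rintro rfl
    have hcard_image : (S.image projMap).card ≤ (Module.finrank ℝ F + 1).choose 2 := by
      rw [Nat.choose_two_right, Nat.le_div_iff_mul_le two_pos, Nat.add_sub_cancel]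
      linarith [two_mul_card_image_projMap_le h₀ hsym]
    obtain ⟨w, hw⟩ := exists_apply_projMap_eq_of_even (S := (S : Set F)) hω
    obtain ⟨Q, hQsymm, hQ⟩ := hperfect.exists_isSymmetric_inner_map_self_eq hcard_image w
    have hQω : ∀ x ∈ S, ⟪x, Q x⟫ = ω x := fun x hx ↦ (hQ x hx).trans (hw x hx)
    exact ⟨Q, hQsymm, hQω, trace_eq hQω⟩

end ProjMap

/-- Theorem 3.2(iv): if `S` is minimally extreme with eutaxy coefficients
`υ`, and `ω : S → ℝ` is even, then a symmetric map `Q` with `⟪x, Qx⟫ = ω x` on `S` and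
`trace Q = ω₀` exists iff `ω₀ = Σ_{x∈S} υ_x ω_x`. -/
theorem minimally_extreme_symmetric_map_exists (n : ℕ) (hn : 2 ≤ n) (S : Finset (Euc n))
    (hunit : ∀ x ∈ S, ‖x‖ = 1) (hsym : ∀ x ∈ S, -x ∈ S)
    (hcard : S.card = n * (n + 1)) (hperfect : IsPerfectCfg (↑S : Set (Euc n)))
    (υ : Euc n → ℝ) (hpos : ∀ x ∈ S, 0 < υ x) (hυsym : ∀ x ∈ S, υ x = υ (-x))
    (heutaxy : ∑ x ∈ S, υ x • projMap x = (LinearMap.id : Euc n →ₗ[ℝ] Euc n))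
    (ω : Euc n → ℝ) (hω : ∀ x ∈ S, ω x = ω (-x)) (ω₀ : ℝ) :
    (∃ Q : Euc n →ₗ[ℝ] Euc n, Q.IsSymmetric ∧ (∀ x ∈ S, ⟪x, Q x⟫ = ω x) ∧
        LinearMap.trace ℝ (Euc n) Q = ω₀) ↔
      ω₀ = ∑ x ∈ S, υ x * ω x := by
  exact minimally_extreme_symmetric_map_exists_general S (fun h₀ ↦ by simpa using hunit 0 h₀) hsym
    (by simpa using hcard.le) hperfect υ heutaxy ω hω ω₀

end
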